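/- Let π be a binomial transport plan with nodes (x, x⁻, x⁺, y⁻⁻, y⁻⁺, y⁺⁻, y⁺⁺), with right part π_r and left part π_l. Then ∫ |x+y| dπ_l(x,y) ≤ ∫ |x+y| dπ_r(x,y) holds if any of the following conditions is satisfied: (L1) y⁻⁺ ≤ y⁺⁻; (L2) x⁻+y⁺⁻ ≥ 0 and x⁻+y⁻⁻ ≥ 0; (L3) x⁺+y⁺⁺ ≤ 0 and x⁺+y⁻⁺ ≤ 0; (L4) x⁺+y⁻⁺ ≤ 0, x⁺+y⁺⁻ ≤ 0 and x⁺+y⁺⁺ ≥ 0; (L5) x⁻+y⁺⁻ ≥ 0, x⁻+y⁻⁺ ≥ 0 and x⁻+y⁻⁻ ≤ 0; (L6) x⁻+y⁻⁺ ≥ 0, x⁻+y⁻⁻ ≤ 0, x⁺+y⁺⁻ ≥ 0, y⁻⁻ ≤ y⁺⁻ ≤ y⁺⁺ ≤ y⁻⁺, (1−λ₋)(x⁺−x⁻) ≤ x⁺+y⁺⁻ and (1−λ₊)(x⁺−x⁻) ≤ x⁺+y⁺⁺, where λ₋, λ₊ are defined by λ₋y⁻⁻+(1−λ₋)y⁻⁺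 = y⁺⁻ and λ₊y⁻⁻+(1−λ₊)y⁻⁺ = y⁺⁺; (L7) x⁻+y⁻⁺ ≥ 0 ≥ x⁻+y⁻⁻, x⁻+y⁺⁺ ≥ 0, x⁺+y⁺⁻ ≤ 0, y⁺⁻ ≤ y⁻⁻ ≤ y⁺⁺ ≤ y⁻⁺ and λ(x⁺−x⁻) ≤ −(x⁻+y⁻⁻), where λ is defined by λy⁺⁻+(1−λ)y⁺⁺ = y⁻⁻; (L8) y⁻⁻ = y⁺⁻ =: y⁻, x⁺+y⁻ ≤ 0, x⁻+y⁻⁺ ≥ 0, x⁺+y⁺⁺ ≥ 0, y⁺⁺ ≤ y⁻⁺ and (1−λ)(x⁺−x⁻) ≤ x⁺+y⁺⁺, where λ is defined by λy⁻+(1−λ)y⁻⁺ = y⁺⁺; (L9) y⁻⁺ = y⁺⁺ and y⁻⁻ = y⁺⁻. -/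

import Mathlib

open MeasureTheory

noncomputable section

/-- `λ⁺`: the weight of the upper branch of the first step. -/
def lamP (x xm xp : ℝ) : ℝ := if xm < xp then (x - xm) / (xp - xm) else 1

/-- `λ⁻ := 1 - λ⁺`. -/
def lamM (x xm xp : ℝ) : ℝ := 1 - lamP x xm xp

/-- `λ⁻⁺`: the upper weight of the second step out of `x⁻`. -/
def lamMP (xm ymm ymp : ℝ) : ℝ := if ymm < ymp then (xm - ymm) / (ymp - ymm) else 1

/-- `λ⁻⁻ := 1 - λ⁻⁺`. -/
def lamMM (xm ymm ymp : ℝ) : ℝ := 1 - lamMP xm ymm ymp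

/-- `λ⁺⁺`: the upper weight of the second step out of `x⁺`. -/
def lamPP (xp ypm ypp : ℝ) : ℝ := if ypm < ypp then (xp - ypm) / (ypp - ypm) else 1

/-- `λ⁺⁻ := 1 - λ⁺⁺`. -/
def lamPM (xp ypm ypp : ℝ) : ℝ := 1 - lamPP xp ypm ypp

/-- The binomial transport plan (BTP) with nodes `(x, x⁻, x⁺, y⁻⁻, y⁻⁺, y⁺⁻, y⁺⁺)`,
a probability measure on `ℝ³`. -/
def BTP (x xm xp ymm ymp ypm ypp : ℝ) : Measure (ℝ × ℝ × ℝ) :=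
  ENNReal.ofReal (lamM x xm xp * lamMM xm ymm ymp) • Measure.dirac (x, xm, ymm) +
  ENNReal.ofReal (lamM x xm xp * lamMP xm ymm ymp) • Measure.dirac (x, xm, ymp) +
  ENNReal.ofReal (lamP x xm xp * lamPM xp ypm ypp) • Measure.dirac (x, xp, ypm) +
  ENNReal.ofReal (lamP x xm xp * lamPP xp ypm ypp) • Measure.dirac (x, xp, ypp)

/-- The right part `π_r` of the BTP with the given nodes. -/
def rightPart (x xm xp ymm ymp ypm ypp : ℝ) : Measure (ℝ × ℝ) :=
  ENNReal.ofReal (lamM x xm xp * lamMM xm ymm ymp) • Measure.dirac (xm, ymm) +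
  ENNReal.ofReal (lamM x xm xp * lamMP xm ymm ymp) • Measure.dirac (xm, ymp) +
  ENNReal.ofReal (lamP x xm xp * lamPM xp ypm ypp) • Measure.dirac (xp, ypm) +
  ENNReal.ofReal (lamP x xm xp * lamPP xp ypm ypp) • Measure.dirac (xp, ypp)

/-- The left part `π_l` of the BTP with the given nodes. -/
def leftPart (x xm xp ymm ymp ypm ypp : ℝ) : Measure (ℝ × ℝ) :=
  ENNReal.ofReal (lamM x xm xp * lamMM xm ymm ymp) • Measure.dirac (x, ymm) +
  ENNReal.ofReal (lamM x xm xp * lamMP xm ymm ymp) • Measure.dirac (x, ymp) +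
  ENNReal.ofReal (lamP x xm xp * lamPM xp ypm ypp) • Measure.dirac (x, ypm) +
  ENNReal.ofReal (lamP x xm xp * lamPP xp ypm ypp) • Measure.dirac (x, ypp)

/-- A measure on `ℝ²` has finite support. -/
def FinSupp (ρ : Measure (ℝ × ℝ)) : Prop :=
  ∃ S : Finset (ℝ × ℝ), ρ ((↑S : Set (ℝ × ℝ))ᶜ) = 0

/-- Equality of the two marginals of two measures on `ℝ²`. -/
def SameMarginals (ρ ρ' : Measure (ℝ × ℝ)) : Prop :=
  ρ'.map Prod.fst = ρ.map Prod.fst ∧ ρ'.map Prod.snd = ρ.map Prod.snd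

/-- The fiberwise barycenter (martingale) condition:
`∫_{{s}×ℝ} t dρ(s,t) = s · ρ({s}×ℝ)` for every `s`. -/
def FiberBarycenter (ρ : Measure (ℝ × ℝ)) : Prop :=
  ∀ s : ℝ, ∫ p in {p : ℝ × ℝ | p.1 = s}, p.2 ∂ρ =
    s * (ρ {p : ℝ × ℝ | p.1 = s}).toReal

/-- Integral of a function against four weighted Dirac masses. -/
theorem four_dirac_integral (f : ℝ × ℝ → ℝ) (c1 c2 c3 c4 : ℝ) (p1 p2 p3 p4 : ℝ × ℝ)
    (h1 : 0 ≤ c1) (h2 : 0 ≤ c2) (h3 : 0 ≤ c3) (h4 : 0 ≤ c4) :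
    ∫ p, f p ∂(ENNReal.ofReal c1 • Measure.dirac p1 + ENNReal.ofReal c2 • Measure.dirac p2 +
      ENNReal.ofReal c3 • Measure.dirac p3 + ENNReal.ofReal c4 • Measure.dirac p4) =
      c1 * f p1 + c2 * f p2 + c3 * f p3 + c4 * f p4 := by
  have hi : ∀ (c : ℝ) (q : ℝ × ℝ), Integrable f (ENNReal.ofReal c • Measure.dirac q) :=
    fun c q => (integrable_dirac (by simp)).smul_measure ENNReal.ofReal_ne_top
  rw [integral_add_measure (((hi _ _).add_measure (hi _ _)).add_measure (hi _ _)) (hi _ _),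
    integral_add_measure ((hi _ _).add_measure (hi _ _)) (hi _ _),
    integral_add_measure (hi _ _) (hi _ _)]
  simp [integral_smul_measure, ENNReal.toReal_ofReal, h1, h2, h3, h4]

/-- A weight of the two-point law on `u ≤ v` with barycenter `m`. -/
theorem weight_facts (m u v : ℝ) (h1 : u ≤ m) (h2 : m ≤ v) :
    ∃ a : ℝ, (if u < v then (m - u) / (v - u) else 1) = a ∧ 0 ≤ a ∧ 0 ≤ 1 - a ∧
      (1 - a) * u + a * v = m := by
  refine ⟨_, rfl, ?_⟩
  split_ifs with h
  · have hd : 0 < v - u := by linarith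
    refine ⟨by apply div_nonneg <;> linarith, ?_, ?_⟩
    · rw [sub_nonneg, div_le_one hd]; linarith
    · field_simp; ring
  · exact ⟨by norm_num, by norm_num, by linarith⟩

/-- Convexity of the cost in the first variable. -/
theorem cost_convex (p x xm xp y : ℝ) (h0 : 0 ≤ p) (h1 : 0 ≤ 1 - p)
    (h : (1 - p) * xm + p * xp = x) :
    |x + y| ≤ (1 - p) * |xm + y| + p * |xp + y| := by
  have e : x + y = (1 - p) * (xm + y) + p * (xp + y) := by rw [← h]; ring
  rw [e]
  refine (abs_add_le _ _).trans ?_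
  rw [abs_mul, abs_mul, abs_of_nonneg h0, abs_of_nonneg h1]

theorem chord_exists (u v gu gv : ℝ) (h : u < v) (hg : gu ≤ gv) :
    ∃ α β : ℝ, 0 ≤ β ∧ α + β * u = gu ∧ α + β * v = gv := by
  have hd : 0 < v - u := by linarith
  refine ⟨gu - (gv - gu) / (v - u) * u, (gv - gu) / (v - u),
    div_nonneg (by linarith) hd.le, by ring, ?_⟩
  field_simp; ring

/-- In each case an increasing affine function separates the increments. -/
theorem exists_affine (xm xp ymm ymp ypm ypp : ℝ) (g : ℝ → ℝ)
    (hD : xm ≤ xp) (h3 : ymm ≤ xm) (h4 : xm ≤ ymp) (h5 : ypm ≤ xp) (h6 : xp ≤ ypp)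
    (glo : ∀ y, xp + y ≤ 0 → g y = -(xp - xm))
    (ghi : ∀ y, 0 ≤ xm + y → g y = xp - xm)
    (gmid : ∀ y, 0 ≤ xp + y → xm + y ≤ 0 → g y = xm + xp + 2 * y)
    (gmono : ∀ y z, y ≤ z → g y ≤ g z)
    (hcases :
      -- (L1)
      (ymp ≤ ypm) ∨
      -- (L2)
      (xm + ypm ≥ 0 ∧ xm + ymm ≥ 0) ∨
      -- (L3)
      (xp + ypp ≤ 0 ∧ xp + ymp ≤ 0) ∨
      -- (L4)
      (xp + ymp ≤ 0 ∧ xp + ypm ≤ 0 ∧ xp + ypp ≥ 0) ∨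
      -- (L5)
      (xm + ypm ≥ 0 ∧ xm + ymp ≥ 0 ∧ xm + ymm ≤ 0) ∨
      -- (L6)
      (xm + ymp ≥ 0 ∧ xm + ymm ≤ 0 ∧ xp + ypm ≥ 0 ∧
        ymm ≤ ypm ∧ ypm ≤ ypp ∧ ypp ≤ ymp ∧
        ∃ lm lp : ℝ,
          lm * ymm + (1 - lm) * ymp = ypm ∧
          lp * ymm + (1 - lp) * ymp = ypp ∧
          (1 - lm) * (xp - xm) ≤ xp + ypm ∧
          (1 - lp) * (xp - xm) ≤ xp + ypp) ∨
      -- (L7)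
      (xm + ymp ≥ 0 ∧ 0 ≥ xm + ymm ∧ xm + ypp ≥ 0 ∧ xp + ypm ≤ 0 ∧
        ypm ≤ ymm ∧ ymm ≤ ypp ∧ ypp ≤ ymp ∧
        ∃ l : ℝ, l * ypm + (1 - l) * ypp = ymm ∧
          l * (xp - xm) ≤ -(xm + ymm)) ∨
      -- (L8)
      (ymm = ypm ∧ xp + ymm ≤ 0 ∧ xm + ymp ≥ 0 ∧ xp + ypp ≥ 0 ∧ ypp ≤ ymp ∧
        ∃ l : ℝ, l * ymm + (1 - l) * ymp = ypp ∧
          (1 - l) * (xp - xm) ≤ xp + ypp) ∨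
      -- (L9)
      (ymp = ypp ∧ ymm = ypm)) :
    ∃ α β : ℝ, 0 ≤ β ∧ g ymm ≤ α + β * ymm ∧ g ymp ≤ α + β * ymp ∧
      α + β * ypm ≤ g ypm ∧ α + β * ypp ≤ g ypp := by
  have m1 := gmono ymm ymp (by linarith)
  have m2 := gmono ypm ypp (by linarith)
  have mD := fun y => gmono y (max y (-xm)) (le_max_left _ _)
  have gle : ∀ y, g y ≤ xp - xm := fun y => by
    have h := mD y
    rwa [ghi (max y (-xm)) (by linarith [le_max_right y (-xm)])] at h
  have gge : ∀ y, -(xp - xm) ≤ g y := fun y => by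
    have h := gmono (min y (-xp)) y (min_le_left _ _)
    rwa [glo (min y (-xp)) (by linarith [min_le_right y (-xp)])] at h
  -- lower bound of `g` to the right of `-xp`
  have glow : ∀ y t, 0 ≤ xp + y → t ≤ xp - xm → t ≤ xm + xp + 2 * y → t ≤ g y := by
    intro y t hy ht1 ht2
    rcases le_total (xm + y) 0 with h | h
    · rw [gmid y hy h]; exact ht2
    · rw [ghi y h]; exact ht1
  rcases hcases with H | ⟨H1, H2⟩ | ⟨H1, H2⟩ | ⟨H1, H2, H3⟩ | ⟨H1, H2, H3⟩ |
    ⟨H1, H2, H3, H4, H5, H6, lm, lp, e1, e2, H7, H8⟩ |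
    ⟨H1, H2, H3, H4, H5, H6, H7, l, e, H8⟩ | ⟨H1, H2, H3, H4, H5, l, e, H6⟩ | ⟨H1, H2⟩
  · have m3 := gmono ymp ypm H
    exact ⟨g ymp, 0, le_rfl, by linarith, by linarith, by linarith, by linarith⟩
  · have k1 := ghi ypm H1
    exact ⟨xp - xm, 0, le_rfl, by linarith [gle ymm], by linarith [gle ymp], by linarith,
      by linarith⟩
  · have k1 := glo ymp H2
    exact ⟨-(xp - xm), 0, le_rfl, by linarith, by linarith, by linarith [gge ypm],
      by linarith [gge ypp]⟩
  · have k1 := glo ymp H1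
    exact ⟨-(xp - xm), 0, le_rfl, by linarith, by linarith, by linarith [gge ypm],
      by linarith [gge ypp]⟩
  · have k1 := ghi ypm H1
    exact ⟨xp - xm, 0, le_rfl, by linarith [gle ymm], by linarith [gle ymp], by linarith,
      by linarith⟩
  · -- (L6)
    rcases (h3.trans h4).eq_or_lt with hE | hlt
    · exact ⟨g ymm, 0, le_rfl, by linarith, by rw [hE]; linarith,
        by linarith [gmono ymm ypm H4], by linarith [gmono ymm ypp (by linarith)]⟩
    obtain ⟨α, β, hβ, c1, c2⟩ := chord_exists ymm ymp _ _ hlt m1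
    have key : ∀ l y, l * ymm + (1 - l) * ymp = y → ymm ≤ y → y ≤ ymp → 0 ≤ xp + y →
        (1 - l) * (xp - xm) ≤ xp + y → α + β * y ≤ g y := by
      intro l y e hy1 hy2 hy3 hl
      have hl0 : 0 ≤ l := by
        by_contra hc
        nlinarith
      have hl1 : 0 ≤ 1 - l := by
        by_contra hc
        nlinarith
      have ec : α + β * y = l * g ymm + (1 - l) * g ymp := by
        rw [← c1, ← c2, ← e]; ring
      rw [ec, ghi ymp H1]
      apply glow y _ hy3
      · nlinarith [mul_le_mul_of_nonneg_left (gle ymm) hl0]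
      · rcases le_total (xp + ymm) 0 with hh | hh
        · rw [glo ymm hh]; linarith
        · rw [gmid ymm hh H2]
          nlinarith [mul_nonneg hl1 H1]
    exact ⟨α, β, hβ, c1.ge, c2.ge, key lm ypm e1 H4 (by linarith) H3 H7,
      key lp ypp e2 (by linarith) H6 (by linarith) H8⟩
  · -- (L7)
    rcases (h5.trans h6).eq_or_lt with hE | hlt
    · have k2 := glo ypm H4
      have k3 := ghi ypp H3
      rw [← hE] at k3
      exact ⟨0, 0, le_rfl, by linarith [gle ymm], by linarith [gle ymp],
        by linarith, by rw [← hE]; linarith⟩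
    obtain ⟨α, β, hβ, c1, c2⟩ := chord_exists ypm ypp _ _ hlt m2
    have k1 := glo ypm H4
    have k2 := ghi ypp H3
    have hl1 : 0 ≤ 1 - l := by
      by_contra hc
      nlinarith
    have ec : α + β * ymm = l * g ypm + (1 - l) * g ypp := by
      rw [← c1, ← c2, ← e]; ring
    refine ⟨α, β, hβ, ?_, ?_, c1.le, c2.le⟩
    · rw [ec, k1, k2]
      rcases le_total (xp + ymm) 0 with hh | hh
      · rw [glo ymm hh]
        nlinarith [mul_nonneg hl1 (sub_nonneg.2 hD)]
      · rw [gmid ymm hh H2]; linarith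
    · have := mul_le_mul_of_nonneg_left H7 hβ
      linarith [gle ymp]
  · -- (L8)
    rcases (h3.trans h4).eq_or_lt with hE | hlt
    · exact ⟨g ymm, 0, le_rfl, by linarith, by rw [hE]; linarith,
        by rw [← H1]; linarith, by linarith [gmono ymm ypp (by linarith)]⟩
    obtain ⟨α, β, hβ, c1, c2⟩ := chord_exists ymm ymp _ _ hlt m1
    have hl0 : 0 ≤ l := by
      by_contra hc
      nlinarith
    have ec : α + β * ypp = l * g ymm + (1 - l) * g ymp := by
      rw [← c1, ← c2, ← e]; ring
    refine ⟨α, β, hβ, c1.ge, c2.ge, by rw [← H1]; exact c1.le, ?_⟩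
    rw [ec, ghi ymp H3, glo ymm H2]
    apply glow ypp _ H4
    · nlinarith [mul_nonneg hl0 (sub_nonneg.2 hD)]
    · linarith
  · subst H1 H2
    rcases (h3.trans h4).eq_or_lt with hE | hlt
    · exact ⟨g ymm, 0, le_rfl, by linarith, by rw [hE]; linarith, by linarith, by linarith⟩
    obtain ⟨α, β, hβ, c1, c2⟩ := chord_exists ymm ymp _ _ hlt m1
    exact ⟨α, β, hβ, c1.ge, c2.ge, c1.le, c2.le⟩

/-- Computational lemma: the cost (for `|x + y|`) of the left part of a BTP is
dominated by the cost of its right part whenever any of the conditions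
(L1)–(L9) holds. -/
theorem btp_left_le_right_cases
    (x xm xp ymm ymp ypm ypp : ℝ)
    (h1 : xm ≤ x) (h2 : x ≤ xp)
    (h3 : ymm ≤ xm) (h4 : xm ≤ ymp)
    (h5 : ypm ≤ xp) (h6 : xp ≤ ypp)
    (hcases :
      -- (L1)
      (ymp ≤ ypm) ∨
      -- (L2)
      (xm + ypm ≥ 0 ∧ xm + ymm ≥ 0) ∨
      -- (L3)
      (xp + ypp ≤ 0 ∧ xp + ymp ≤ 0) ∨
      -- (L4)
      (xp + ymp ≤ 0 ∧ xp + ypm ≤ 0 ∧ xp + ypp ≥ 0) ∨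
      -- (L5)
      (xm + ypm ≥ 0 ∧ xm + ymp ≥ 0 ∧ xm + ymm ≤ 0) ∨
      -- (L6)
      (xm + ymp ≥ 0 ∧ xm + ymm ≤ 0 ∧ xp + ypm ≥ 0 ∧
        ymm ≤ ypm ∧ ypm ≤ ypp ∧ ypp ≤ ymp ∧
        ∃ lm lp : ℝ,
          lm * ymm + (1 - lm) * ymp = ypm ∧
          lp * ymm + (1 - lp) * ymp = ypp ∧
          (1 - lm) * (xp - xm) ≤ xp + ypm ∧
          (1 - lp) * (xp - xm) ≤ xp + ypp) ∨
      -- (L7)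
      (xm + ymp ≥ 0 ∧ 0 ≥ xm + ymm ∧ xm + ypp ≥ 0 ∧ xp + ypm ≤ 0 ∧
        ypm ≤ ymm ∧ ymm ≤ ypp ∧ ypp ≤ ymp ∧
        ∃ l : ℝ, l * ypm + (1 - l) * ypp = ymm ∧
          l * (xp - xm) ≤ -(xm + ymm)) ∨
      -- (L8)
      (ymm = ypm ∧ xp + ymm ≤ 0 ∧ xm + ymp ≥ 0 ∧ xp + ypp ≥ 0 ∧ ypp ≤ ymp ∧
        ∃ l : ℝ, l * ymm + (1 - l) * ymp = ypp ∧
          (1 - l) * (xp - xm) ≤ xp + ypp) ∨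
      -- (L9)
      (ymp = ypp ∧ ymm = ypm)) :
    ∫ p : ℝ × ℝ, |p.1 + p.2| ∂(leftPart x xm xp ymm ymp ypm ypp) ≤
      ∫ p : ℝ × ℝ, |p.1 + p.2| ∂(rightPart x xm xp ymm ymp ypm ypp) := by
  obtain ⟨p, hp, hp0, hp1, hpx⟩ := weight_facts x xm xp h1 h2
  obtain ⟨a, ha, ha0, ha1, hax⟩ := weight_facts xm ymm ymp h3 h4
  obtain ⟨b, hb, hb0, hb1, hbx⟩ := weight_facts xp ypm ypp h5 h6
  have hD : xm ≤ xp := h1.trans h2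
  obtain ⟨α, β, hβ, g1, g2, g3, g4⟩ := exists_affine xm xp ymm ymp ypm ypp
    (fun y => |xp + y| - |xm + y|) hD h3 h4 h5 h6
    (fun y hy => by
      rw [abs_of_nonpos hy, abs_of_nonpos (by linarith : xm + y ≤ 0)]; ring)
    (fun y hy => by
      rw [abs_of_nonneg hy, abs_of_nonneg (by linarith : 0 ≤ xp + y)]; ring)
    (fun y hy hy2 => by
      rw [abs_of_nonneg hy, abs_of_nonpos hy2]; ring)
    (fun y z hyz => by
      rcases abs_cases (xp + y) with ⟨r1, s1⟩ | ⟨r1, s1⟩ <;>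
      rcases abs_cases (xm + y) with ⟨r2, s2⟩ | ⟨r2, s2⟩ <;>
      rcases abs_cases (xp + z) with ⟨r3, s3⟩ | ⟨r3, s3⟩ <;>
      rcases abs_cases (xm + z) with ⟨r4, s4⟩ | ⟨r4, s4⟩ <;>
      linarith)
    hcases
  unfold leftPart rightPart lamM lamMM lamPM lamP lamMP lamPP
  rw [hp, ha, hb]
  have w1 := mul_nonneg hp1 ha1
  have w2 := mul_nonneg hp1 ha0
  have w3 := mul_nonneg hp0 hb1
  have w4 := mul_nonneg hp0 hb0
  rw [four_dirac_integral _ _ _ _ _ _ _ _ _ w1 w2 w3 w4,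
    four_dirac_integral _ _ _ _ _ _ _ _ _ w1 w2 w3 w4]
  simp only
  have q1 := mul_le_mul_of_nonneg_left (cost_convex p x xm xp ymm hp0 hp1 hpx) w1
  have q2 := mul_le_mul_of_nonneg_left (cost_convex p x xm xp ymp hp0 hp1 hpx) w2
  have q3 := mul_le_mul_of_nonneg_left (cost_convex p x xm xp ypm hp0 hp1 hpx) w3
  have q4 := mul_le_mul_of_nonneg_left (cost_convex p x xm xp ypp hp0 hp1 hpx) w4
  have hE : (1 - a) * (|xp + ymm| - |xm + ymm|) + a * (|xp + ymp| - |xm + ymp|) ≤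
      (1 - b) * (|xp + ypm| - |xm + ypm|) + b * (|xp + ypp| - |xm + ypp|) := by
    have r1 := mul_le_mul_of_nonneg_left g1 ha1
    have r2 := mul_le_mul_of_nonneg_left g2 ha0
    have r3 := mul_le_mul_of_nonneg_left g3 hb1
    have r4 := mul_le_mul_of_nonneg_left g4 hb0
    have r5 := mul_le_mul_of_nonneg_left hD hβ
    have t1 : (1 - a) * (α + β * ymm) + a * (α + β * ymp) = α + β * xm := by
      rw [← hax]; ring
    have t2 : (1 - b) * (α + β * ypm) + b * (α + β * ypp) = α + β * xp := by
      rw [← hbx]; ring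
    linarith
  have hF := mul_le_mul_of_nonneg_left hE (mul_nonneg hp0 hp1)
  linarith
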